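/- If G₁ and G₂ are autostackable groups, then their free product G₁ ∗ G₂ is autostackable. -/

import Mathlib

/-!
The generating set of the free product is the disjoint union of the two alphabets, and the normal
forms are the words each of whose maximal one-alphabet blocks is a normal form of the
corresponding factor. The stacking map applied to `(y, a)`, with `a` in the `i`-th alphabet, is
the stacking map of the `i`-th factor applied to the last block of `y` over that alphabet
(possibly empty) and `a`. The argument is written for a finite family of factors, so that the
two sides need not be treated separately.

*Normal forms* (`free_nf`). Each factor acts on the right on normal forms by altering only the
last block over its alphabet (`act`), and by the universal property these actions combine into an
action of the free product. Acting on the empty word sends `g` to a normal form of `g`, and sends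
the value of a normal form `w` back to `w`; this gives existence and uniqueness.

*Termination* (`free_isStacking`). The stacking map of a factor only outputs letters of its own
alphabet, so an infinite chain lives over one alphabet, and its last blocks would be an infinite
chain in that factor.

*Regularity* (`free_isAuto`). Stacking values have bounded length, so the graph is synchronously
regular exactly when each set `{y | φ (y, a) = v}` is regular (`SyncRegular3.fiber` and
`IsRegularLang.pad`). For the free product this set is the intersection of the regular language of
normal forms with the preimage of such a set for a factor under taking the last block, a map pulling
regular languages back to regular languages (`IsRegularLang.tailBlock_preimage`).
-/

/-- Evaluation of a word over an alphabet `α` in a monoid `G` via a letter map `π`. -/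
def wordVal {G : Type} [Monoid G] {α : Type} (π : α → G) (w : List α) : G :=
  (w.map π).prod

/-- A language is prefix-closed if it contains every prefix of each of its words. -/
def PrefixClosed {α : Type} (N : Set (List α)) : Prop :=
  ∀ w ∈ N, ∀ p : List α, p <+: w → p ∈ N

/-- `(α, π, inv)` is a finite inverse-closed generating set for the group `G`:
no letter represents the identity, `inv` is an involution with `π (inv a) = (π a)⁻¹`,
and the letters generate `G`. -/
structure IsInvGenSet (G : Type) [Group G] {α : Type} (π : α → G) (inv : α → α) : Prop where
  ne_one : ∀ a, π a ≠ 1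
  inv_invol : ∀ a, inv (inv a) = a
  val_inv : ∀ a, π (inv a) = (π a)⁻¹
  gen : Subgroup.closure (Set.range π) = ⊤

/-- A language over `α` is regular if it is accepted by a finite state automaton. -/
def IsRegularLang {α : Type} (L : Set (List α)) : Prop :=
  ∃ (σ : Type) (_ : Fintype σ) (M : DFA α σ), M.accepts = L

/-- The padded word over `(α ∪ {$})²` corresponding to a pair of words;
`none` plays the role of the padding symbol `$`. -/
def padWord2 {α : Type} (p : List α × List α) : List (Option α × Option α) :=
  (List.range (max p.1.length p.2.length)).map (fun i => (p.1[i]?, p.2[i]?))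

/-- Synchronous regularity of a set of pairs of words. -/
def SyncRegular2 {α : Type} (L : Set (List α × List α)) : Prop :=
  IsRegularLang (padWord2 '' L)

/-- The padded word over `(α ∪ {$})³` corresponding to a triple of words. -/
def padWord3 {α : Type} (p : List α × List α × List α) :
    List (Option α × Option α × Option α) :=
  (List.range (max p.1.length (max p.2.1.length p.2.2.length))).map
    (fun i => (p.1[i]?, p.2.1[i]?, p.2.2[i]?))

/-- Synchronous regularity of a set of triples of words. -/
def SyncRegular3 {α : Type} (L : Set (List α × List α × List α)) : Prop :=
  IsRegularLang (padWord3 '' L)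

structure StackingData (α : Type) where
  N : Set (List α)
  K : ℕ
  phi : List α → α → List α

/-- `st` is a stackable structure for `G` over the finite inverse-closed generating
set `(α, π, inv)`. -/
structure IsStacking (G : Type) [Group G] {α : Type} (π : α → G) (inv : α → α)
    (st : StackingData α) : Prop where
  gen : IsInvGenSet G π inv
  nf : ∀ g : G, ∃! w, w ∈ st.N ∧ wordVal π w = g
  prefixClosed : PrefixClosed st.N
  F1 : ∀ y ∈ st.N, ∀ a : α, wordVal π (st.phi y a) = π a ∧ (st.phi y a).length ≤ st.K
  F2 : ∀ y ∈ st.N, ∀ a : α, (y ++ [a] ∈ st.N ∨ ∃ y', y = y' ++ [inv a]) → st.phi y a = [a]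
  F3 : ¬ ∃ seq : ℕ → List α × α,
      ∀ i : ℕ, (seq i).1 ∈ st.N ∧ (seq i).1 ++ [(seq i).2] ∉ st.N ∧
        (¬ ∃ y', (seq i).1 = y' ++ [inv (seq i).2]) ∧
        ∃ u u' : List α, st.phi (seq i).1 (seq i).2 = u ++ (seq (i+1)).2 :: u' ∧
          (seq (i+1)).1 ∈ st.N ∧
          wordVal π ((seq (i+1)).1) = wordVal π ((seq i).1 ++ u)

/-- The regularity conditions making a stackable structure autostackable:
the set of normal forms is regular and the graph of the stacking function is
synchronously regular. -/
def StackingData.IsAuto {α : Type} (st : StackingData α) : Prop :=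
  IsRegularLang st.N ∧
  SyncRegular3 {t : List α × List α × List α | ∃ y ∈ st.N, ∃ a : α, t = (y, [a], st.phi y a)}

/-- The stacking structure `st` respects the subgroup `H`. -/
def RespectsSubgroup {G : Type} [Group G] {α : Type} (π : α → G) (inv : α → α)
    (st : StackingData α) (H : Subgroup G) : Prop :=
  ∃ B : Set α,
    (∀ b ∈ B, inv b ∈ B) ∧
    (∀ b ∈ B, π b ∈ H) ∧
    Subgroup.closure (π '' B) = H ∧
    ∃ NH NTr : Set (List α),
      (∀ w ∈ NH, ∀ b ∈ w, b ∈ B) ∧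
      PrefixClosed NH ∧
      (∀ h : G, h ∈ H → ∃! w, w ∈ NH ∧ wordVal π w = h) ∧
      PrefixClosed NTr ∧
      (∀ g : G, ∃! w, w ∈ NTr ∧ wordVal π w * g⁻¹ ∈ H) ∧
      st.N = {w | ∃ u ∈ NH, ∃ v ∈ NTr, w = u ++ v} ∧
      (∀ y ∈ st.N, wordVal π y ∈ H → ∀ b ∈ B, ∀ c ∈ st.phi y b, c ∈ B) ∧
      (∀ a : α, ∀ y ∈ st.N, ∀ y' ∈ st.N,
        ¬(wordVal π y ∈ H ∧ a ∈ B) →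
        (∃ h ∈ H, wordVal π y' = h * wordVal π y) → st.phi y' a = st.phi y a)

/-- A group is autostackable if it admits an autostackable structure over some
finite inverse-closed generating set. -/
def Autostackable (G : Type) [Group G] : Prop :=
  ∃ (α : Type) (_ : Fintype α) (π : α → G) (inv : α → α) (st : StackingData α),
    IsStacking G π inv st ∧ st.IsAuto

/-- A group is stackable if it admits a stackable structure over some
finite inverse-closed generating set. -/
def Stackable (G : Type) [Group G] : Prop :=
  ∃ (α : Type) (_ : Fintype α) (π : α → G) (inv : α → α) (st : StackingData α),
    IsStacking G π inv st

/-- `G` is autostackable respecting the subgroup `H`. -/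
def AutostackableRespecting (G : Type) [Group G] (H : Subgroup G) : Prop :=
  ∃ (α : Type) (_ : Fintype α) (π : α → G) (inv : α → α) (st : StackingData α),
    IsStacking G π inv st ∧ st.IsAuto ∧ RespectsSubgroup π inv st H

/-- `G` is stackable respecting the subgroup `H`. -/
def StackableRespecting (G : Type) [Group G] (H : Subgroup G) : Prop :=
  ∃ (α : Type) (_ : Fintype α) (π : α → G) (inv : α → α) (st : StackingData α),
    IsStacking G π inv st ∧ RespectsSubgroup π inv st H

/-! ### Regular languages -/

theorem isRegularLang_iff {α : Type} {L : Set (List α)} :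
    IsRegularLang L ↔ ∃ (σ : Type) (_ : Finite σ) (M : DFA α σ),
      ∀ w, M.eval w ∈ M.accept ↔ w ∈ L := by
  constructor
  · rintro ⟨σ, hσ, M, rfl⟩
    exact ⟨σ, Finite.of_fintype σ, M, fun w => Iff.rfl⟩
  · rintro ⟨σ, hσ, M, h⟩
    exact ⟨σ, Fintype.ofFinite σ, M, Set.ext h⟩

/-- The product of a family of automata over the same alphabet, run in parallel,
with a prescribed set of accepting states. -/
def piDFA {α ι : Type} {σ : ι → Type} (M : ∀ i, DFA α (σ i)) (acc : Set (∀ i, σ i)) :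
    DFA α (∀ i, σ i) :=
  ⟨fun s x i => (M i).step (s i) x, fun i => (M i).start, acc⟩

theorem piDFA_eval {α ι : Type} {σ : ι → Type} (M : ∀ i, DFA α (σ i))
    (acc : Set (∀ i, σ i)) (w : List α) :
    (piDFA M acc).eval w = fun i => (M i).eval w := by
  induction w using List.reverseRecOn with
  | nil => rfl
  | append_singleton w x ih =>
    rw [DFA.eval_append_singleton, ih]
    funext i
    rw [DFA.eval_append_singleton]
    rfl

theorem IsRegularLang.iUnion {α ι : Type} [Finite ι] {L : ι → Set (List α)}
    (h : ∀ i, IsRegularLang (L i)) : IsRegularLang (⋃ i, L i) := by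
  simp only [isRegularLang_iff] at h
  choose σ hσ M hM using h
  refine isRegularLang_iff.2 ⟨∀ i, σ i, inferInstance,
    piDFA M {s | ∃ i, s i ∈ (M i).accept}, fun w => ?_⟩
  rw [piDFA_eval]
  simp [piDFA, hM]

theorem IsRegularLang.iInter {α ι : Type} [Finite ι] {L : ι → Set (List α)}
    (h : ∀ i, IsRegularLang (L i)) : IsRegularLang (⋂ i, L i) := by
  simp only [isRegularLang_iff] at h
  choose σ hσ M hM using h
  refine isRegularLang_iff.2 ⟨∀ i, σ i, inferInstance,
    piDFA M {s | ∀ i, s i ∈ (M i).accept}, fun w => ?_⟩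
  rw [piDFA_eval]
  simp [piDFA, hM]

theorem IsRegularLang.inter {α : Type} {L L' : Set (List α)}
    (h : IsRegularLang L) (h' : IsRegularLang L') : IsRegularLang (L ∩ L') := by
  rw [Set.inter_eq_iInter]
  exact IsRegularLang.iInter (by rintro (_ | _) <;> assumption)

theorem isRegularLang_empty {α : Type} : IsRegularLang (∅ : Set (List α)) :=
  isRegularLang_iff.2 ⟨Unit, inferInstance, ⟨fun _ _ => (), (), ∅⟩, fun w => by simp⟩

theorem forall_prefix_snoc {α : Type} {R : List α → Prop} {w : List α} {x : α} :
    (∀ p, p <+: w ++ [x] → R p) ↔ (∀ p, p <+: w → R p) ∧ R (w ++ [x]) := by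
  simp only [List.prefix_concat_iff]
  constructor
  · exact fun h => ⟨fun p hp => h p (Or.inr hp), h _ (Or.inl rfl)⟩
  · rintro ⟨h, h'⟩ p (rfl | hp)
    exacts [h', h p hp]

/-- The largest prefix-closed subset of a regular language is regular: the automaton
additionally records whether every state visited so far was accepting. -/
theorem IsRegularLang.prefixKernel {α : Type} {L : Set (List α)} (h : IsRegularLang L) :
    IsRegularLang {w | ∀ p, p <+: w → p ∈ L} := by
  obtain ⟨σ, hσ, M, hM⟩ := isRegularLang_iff.1 h
  let D : DFA α (σ × Prop) :=
    ⟨fun s x => (M.step s.1 x, s.2 ∧ M.step s.1 x ∈ M.accept),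
      (M.start, M.start ∈ M.accept), {s | s.2}⟩
  refine isRegularLang_iff.2 ⟨σ × Prop, inferInstance, D, fun w => ?_⟩
  have key : D.eval w = (M.eval w, ∀ p, p <+: w → p ∈ L) := by
    induction w using List.reverseRecOn with
    | nil => simp [D, ← hM]
    | append_singleton w x ih =>
      rw [DFA.eval_append_singleton, ih, forall_prefix_snoc (R := (· ∈ L)), ← hM (w ++ [x]),
        DFA.eval_append_singleton]
  rw [key]
  rfl

/-! ### Padded words -/

theorem padWord3_cons {α : Type} (x : α) (y l t : List α) :
    padWord3 (x :: y, l, t) = (some x, l.head?, t.head?) :: padWord3 (y, l.tail, t.tail) := by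
  have : max (y.length + 1) (max l.length t.length) =
      max y.length (max l.tail.length t.tail.length) + 1 := by
    simp only [List.length_tail]; omega
  simp [padWord3, this, List.range_succ_eq_map, List.head?_eq_getElem?]

theorem padWord3_nil {α : Type} : padWord3 (([], [], []) : List α × List α × List α) = [] := rfl

theorem padWord3_nil_left {α : Type} {l t : List α} (h : ¬(l = [] ∧ t = [])) :
    padWord3 ([], l, t) = (none, l.head?, t.head?) :: padWord3 ([], l.tail, t.tail) := by
  have : max l.length t.length = max l.tail.length t.tail.length + 1 := by
    simp only [← List.length_eq_zero_iff] at h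
    simp only [List.length_tail]; omega
  simp [padWord3, this, List.range_succ_eq_map, List.head?_eq_getElem?]

theorem filterMap_range_getElem? {α : Type} (y : List α) :
    ∀ n, y.length ≤ n → (List.range n).filterMap (fun i => y[i]?) = y := by
  induction y with
  | nil => intro n _; simp
  | cons x y ih =>
    rintro (_ | n) hn
    · simp at hn
    · simp only [List.length_cons, Nat.add_le_add_iff_right] at hn
      rw [List.range_succ_eq_map, List.filterMap_cons_some (b := x) (by simp), List.filterMap_map]
      congr 1
      exact ih n hn

theorem padWord3_injective {α : Type} : Function.Injective (padWord3 (α := α)) := by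
  rintro ⟨y, l, t⟩ ⟨y', l', t'⟩ h
  have e1 := congrArg (List.filterMap (fun q => q.1)) h
  have e2 := congrArg (List.filterMap (fun q => q.2.1)) h
  have e3 := congrArg (List.filterMap (fun q => q.2.2)) h
  simp only [padWord3, List.filterMap_map] at e1 e2 e3
  erw [filterMap_range_getElem? _ _ (by simp), filterMap_range_getElem? _ _ (by simp)] at e1 e2 e3
  rw [e1, e2, e3]

/-- Words of length at most `n`. -/
abbrev ShortWord (α : Type) (n : ℕ) : Type := {l : List α // l.length ≤ n}

instance {α : Type} [Finite α] (n : ℕ) : Finite (ShortWord α n) :=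
  (List.finite_length_le α n).to_subtype

/-- A short word with its first letter removed. -/
def ShortWord.tail {α : Type} {n : ℕ} (l : ShortWord α n) : ShortWord α n :=
  ⟨l.1.tail, by have := l.2; simp only [List.length_tail]; omega⟩

/-- Sections of a synchronously regular set of triples along the last two coordinates are
regular. The automaton stores the parts of the two fixed words not yet consumed. -/
theorem SyncRegular3.fiber {α : Type} [Finite α] {L : Set (List α × List α × List α)}
    (h : SyncRegular3 L) (l t : List α) : IsRegularLang {y | (y, l, t) ∈ L} := by
  obtain ⟨σ, hσ, M, hM⟩ := isRegularLang_iff.1 h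
  let D : DFA α (σ × ShortWord α l.length × ShortWord α t.length) :=
    ⟨fun s x => (M.step s.1 (some x, s.2.1.1.head?, s.2.2.1.head?), s.2.1.tail, s.2.2.tail),
      (M.start, ⟨l, le_rfl⟩, ⟨t, le_rfl⟩),
      {s | M.evalFrom s.1 (padWord3 ([], s.2.1.1, s.2.2.1)) ∈ M.accept}⟩
  refine isRegularLang_iff.2 ⟨_, inferInstance, D, fun w => ?_⟩
  have key : ∀ (w : List α) s, D.evalFrom s w ∈ D.accept ↔
      M.evalFrom s.1 (padWord3 (w, s.2.1.1, s.2.2.1)) ∈ M.accept := by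
    intro w
    induction w with
    | nil => intro s; rfl
    | cons x w ih =>
      intro s
      rw [DFA.evalFrom_cons, ih, padWord3_cons, DFA.evalFrom_cons]
      rfl
  rw [DFA.eval, key]
  exact (hM _).trans padWord3_injective.mem_set_image

open Classical in
/-- Padding the words of a regular language against two fixed words. The states
`some (b, s, l, t)` record whether the first track is still being read (`b`), the state `s`
of the automaton for the first track, and the unread parts `l`, `t` of the fixed words;
`none` is a failure state. -/
theorem IsRegularLang.pad {α : Type} [Finite α] {L : Set (List α)}
    (h : IsRegularLang L) (l t : List α) :
    IsRegularLang {w | ∃ y ∈ L, w = padWord3 (y, l, t)} := by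
  obtain ⟨σ, hσ, M, hM⟩ := isRegularLang_iff.1 h
  let D : DFA (Option α × Option α × Option α)
      (Option (Bool × σ × ShortWord α l.length × ShortWord α t.length)) :=
    ⟨fun q x => match q with
      | none => none
      | some (b, s, l', t') =>
        if x.2.1 = l'.1.head? ∧ x.2.2 = t'.1.head? then
          match b, x.1 with
          | true, some c => some (true, M.step s c, l'.tail, t'.tail)
          | false, some _ => none
          | _, none => if l'.1 = [] ∧ t'.1 = [] then none else some (false, s, l'.tail, t'.tail)
        else none,
      some (true, M.start, ⟨l, le_rfl⟩, ⟨t, le_rfl⟩),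
      {q | ∃ b s l' t', q = some (b, s, l', t') ∧ s ∈ M.accept ∧ l'.1 = [] ∧ t'.1 = []}⟩
  have hacc : ∀ b s l' t', some (b, s, l', t') ∈ D.accept ↔
      s ∈ M.accept ∧ l'.1 = [] ∧ t'.1 = [] := by
    intro b s l' t'
    constructor
    · rintro ⟨b, s, l', t', h, hs⟩
      cases h
      exact hs
    · exact fun h => ⟨_, _, _, _, rfl, h⟩
  have dead : ∀ w, D.evalFrom none w ∉ D.accept := by
    intro w
    induction w with
    | nil => simp [D]
    | cons x w ih => exact ih
  have done : ∀ w s l' t', D.evalFrom (some (false, s, l', t')) w ∈ D.accept ↔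
      s ∈ M.accept ∧ w = padWord3 ([], l'.1, t'.1) := by
    intro w
    induction w with
    | nil =>
      intro s l' t'
      rw [DFA.evalFrom_nil, hacc]
      by_cases hlt : l'.1 = [] ∧ t'.1 = []
      · simp [hlt, padWord3_nil]
      · simp [hlt, padWord3_nil_left hlt]
    | cons x w ih =>
      intro s l' t'
      obtain ⟨x1, x2, x3⟩ := x
      rw [DFA.evalFrom_cons]
      by_cases hlt : l'.1 = [] ∧ t'.1 = []
      · have : D.step (some (false, s, l', t')) (x1, x2, x3) = none := by
          cases x1 <;> simp [D, hlt]
        rw [this]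
        simp [dead, hlt, padWord3_nil]
      · rw [padWord3_nil_left hlt]
        by_cases hx : x2 = l'.1.head? ∧ x3 = t'.1.head?
        · cases x1 with
          | none =>
            have : D.step (some (false, s, l', t')) (none, x2, x3) =
                some (false, s, l'.tail, t'.tail) := by simp [D, hlt, hx]
            rw [this, ih]
            simp [hx, ShortWord.tail]
          | some c =>
            have : D.step (some (false, s, l', t')) (some c, x2, x3) = none := by
              simp [D]
            rw [this]
            simp [dead]
        · have : D.step (some (false, s, l', t')) (x1, x2, x3) = none := by
            simp [D, hx]
          rw [this]
          simp only [dead, false_iff]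
          rintro ⟨-, h⟩
          simp only [List.cons.injEq, Prod.mk.injEq] at h
          exact hx h.1.2
  have reading : ∀ w s l' t', D.evalFrom (some (true, s, l', t')) w ∈ D.accept ↔
      ∃ y, M.evalFrom s y ∈ M.accept ∧ w = padWord3 (y, l'.1, t'.1) := by
    intro w
    induction w with
    | nil =>
      intro s l' t'
      rw [DFA.evalFrom_nil, hacc]
      by_cases hlt : l'.1 = [] ∧ t'.1 = []
      · constructor
        · exact fun h => ⟨[], h.1, by simp [hlt, padWord3_nil]⟩
        · rintro ⟨y, hy, h⟩
          cases y with
          | nil => exact ⟨hy, hlt⟩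
          | cons c y => simp [padWord3_cons] at h
      · simp only [hlt, and_false, false_iff]
        rintro ⟨y, hy, h⟩
        cases y with
        | nil => simp [padWord3_nil_left hlt] at h
        | cons c y => simp [padWord3_cons] at h
    | cons x w ih =>
      intro s l' t'
      obtain ⟨x1, x2, x3⟩ := x
      rw [DFA.evalFrom_cons]
      by_cases hx : x2 = l'.1.head? ∧ x3 = t'.1.head?
      · cases x1 with
        | none =>
          by_cases hlt : l'.1 = [] ∧ t'.1 = []
          · have : D.step (some (true, s, l', t')) (none, x2, x3) = none := by
              simp [D, hlt]
            rw [this]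
            simp only [dead, false_iff]
            rintro ⟨y, hy, h⟩
            cases y with
            | nil => simp [hlt, padWord3_nil] at h
            | cons c y => simp [padWord3_cons] at h
          · have : D.step (some (true, s, l', t')) (none, x2, x3) =
                some (false, s, l'.tail, t'.tail) := by simp [D, hlt, hx]
            rw [this, done]
            constructor
            · rintro ⟨hs, rfl⟩
              exact ⟨[], hs, by simp [padWord3_nil_left hlt, hx, ShortWord.tail]⟩
            · rintro ⟨y, hy, h⟩
              cases y with
              | nil =>
                rw [padWord3_nil_left hlt] at h
                exact ⟨hy, (List.cons.inj h).2⟩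
              | cons c y => simp [padWord3_cons] at h
        | some c =>
          have : D.step (some (true, s, l', t')) (some c, x2, x3) =
              some (true, M.step s c, l'.tail, t'.tail) := by simp [D, hx]
          rw [this, ih]
          constructor
          · rintro ⟨y, hy, rfl⟩
            exact ⟨c :: y, hy, by simp [padWord3_cons, hx, ShortWord.tail]⟩
          · rintro ⟨y, hy, h⟩
            cases y with
            | nil =>
              by_cases hlt : l'.1 = [] ∧ t'.1 = []
              · simp [hlt, padWord3_nil] at h
              · simp [padWord3_nil_left hlt] at h
            | cons c' y =>
              simp only [padWord3_cons, List.cons.injEq, Prod.mk.injEq, Option.some.injEq] at h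
              obtain ⟨⟨rfl, -⟩, h⟩ := h
              exact ⟨y, hy, h⟩
      · have : D.step (some (true, s, l', t')) (x1, x2, x3) = none := by
          simp [D, hx]
        rw [this]
        simp only [dead, false_iff]
        rintro ⟨y, hy, h⟩
        cases y with
        | nil =>
          by_cases hlt : l'.1 = [] ∧ t'.1 = []
          · simp [hlt, padWord3_nil] at h
          · simp only [padWord3_nil_left hlt, List.cons.injEq, Prod.mk.injEq] at h
            exact hx h.1.2
        | cons c y =>
          simp only [padWord3_cons, List.cons.injEq, Prod.mk.injEq] at h
          exact hx h.1.2
  refine isRegularLang_iff.2 ⟨_, inferInstance, D, fun w => (reading w _ _ _).trans ?_⟩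
  exact exists_congr fun y => and_congr_left' (hM y)

/-! ### Values of words and normal forms -/

theorem wordVal_nil {G : Type} [Monoid G] {α : Type} (π : α → G) : wordVal π [] = 1 := rfl

theorem wordVal_append {G : Type} [Monoid G] {α : Type} (π : α → G) (u v : List α) :
    wordVal π (u ++ v) = wordVal π u * wordVal π v := by
  simp [wordVal]

theorem wordVal_singleton {G : Type} [Monoid G] {α : Type} (π : α → G) (a : α) :
    wordVal π [a] = π a := by
  simp [wordVal]

section NormalForm

variable {A Γ : Type} [Group Γ] {ρ : A → Γ} {inv : A → A} {st : StackingData A}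

/-- The normal form of a group element. -/
noncomputable def IsStacking.normalForm (H : IsStacking Γ ρ inv st) (g : Γ) : List A :=
  (H.nf g).choose

theorem IsStacking.normalForm_mem (H : IsStacking Γ ρ inv st) (g : Γ) :
    H.normalForm g ∈ st.N := (H.nf g).choose_spec.1.1

theorem IsStacking.wordVal_normalForm (H : IsStacking Γ ρ inv st) (g : Γ) :
    wordVal ρ (H.normalForm g) = g := (H.nf g).choose_spec.1.2

theorem IsStacking.normalForm_wordVal (H : IsStacking Γ ρ inv st) {w : List A} (hw : w ∈ st.N) :
    H.normalForm (wordVal ρ w) = w := ((H.nf _).choose_spec.2 w ⟨hw, rfl⟩).symm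

theorem IsStacking.nil_mem (H : IsStacking Γ ρ inv st) : [] ∈ st.N :=
  H.prefixClosed _ (H.normalForm_mem 1) _ List.nil_prefix

end NormalForm

section FreeProduct

variable {ι : Type} {α : ι → Type}

/-! ### Blocks of a word over a disjoint union of alphabets -/

/-- A word over the `i`-th alphabet, as a word over the disjoint union. -/
def emb (i : ι) (u : List (α i)) : List (Σ i, α i) := u.map (Sigma.mk i)

theorem emb_append (i : ι) (u v : List (α i)) : emb i (u ++ v) = emb i u ++ emb i v := by
  simp [emb]

theorem emb_injective (i : ι) : Function.Injective (emb (α := α) i) :=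
  List.map_injective_iff.2 sigma_mk_injective

theorem wordVal_emb {G : ι → Type} [∀ i, Group (G i)] {P : Type} [Group P] (j : ∀ i, G i →* P)
    (π : ∀ i, α i → G i) (i : ι) (u : List (α i)) :
    wordVal (fun x : Σ i, α i => j x.1 (π x.1 x.2)) (emb i u) = j i (wordVal (π i) u) := by
  simp [wordVal, emb, map_list_prod, Function.comp_def]

variable [DecidableEq ι]

/-- The longest suffix of `w` all of whose letters lie in the `i`-th alphabet, as a word over
that alphabet. -/
def tailBlock (i : ι) (w : List (Σ i, α i)) : List (α i) :=
  w.foldl (fun acc x => if h : x.1 = i then acc ++ [h ▸ x.2] else []) []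

/-- The word `w` with its longest suffix over the `i`-th alphabet removed. -/
def stripBlock (i : ι) (w : List (Σ i, α i)) : List (Σ i, α i) :=
  w.take (w.length - (tailBlock i w).length)

@[simp] theorem tailBlock_nil (i : ι) : tailBlock i ([] : List (Σ i, α i)) = [] := rfl

@[simp] theorem tailBlock_snoc_self (i : ι) (w : List (Σ i, α i)) (a : α i) :
    tailBlock i (w ++ [⟨i, a⟩]) = tailBlock i w ++ [a] := by
  simp [tailBlock]

theorem tailBlock_snoc_of_ne {i k : ι} (h : k ≠ i) (w : List (Σ i, α i)) (a : α k) :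
    tailBlock i (w ++ [⟨k, a⟩]) = [] := by
  simp [tailBlock, h]

theorem tailBlock_append_emb (i : ι) (w : List (Σ i, α i)) (u : List (α i)) :
    tailBlock i (w ++ emb i u) = tailBlock i w ++ u := by
  induction u using List.reverseRecOn with
  | nil => simp [emb]
  | append_singleton u a ih =>
    rw [emb_append, ← List.append_assoc]
    exact (tailBlock_snoc_self i _ a).trans (by rw [ih, List.append_assoc])

theorem stripBlock_append_emb {i : ι} {p : List (Σ i, α i)} (hp : tailBlock i p = [])
    (u : List (α i)) : stripBlock i (p ++ emb i u) = p := by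
  rw [stripBlock, tailBlock_append_emb, hp]
  simp [emb]

theorem exists_eq_append_emb (i : ι) (w : List (Σ i, α i)) :
    ∃ p u, tailBlock i p = [] ∧ w = p ++ emb i u := by
  induction w using List.reverseRecOn with
  | nil => exact ⟨[], [], rfl, rfl⟩
  | append_singleton w x ih =>
    obtain ⟨k, a⟩ := x
    by_cases h : k = i
    · subst h
      obtain ⟨p, u, hp, rfl⟩ := ih
      exact ⟨p, u ++ [a], hp, by simp [emb]⟩
    · exact ⟨w ++ [⟨k, a⟩], [], tailBlock_snoc_of_ne h w a, by simp [emb]⟩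

theorem strip_append_tail (i : ι) (w : List (Σ i, α i)) :
    stripBlock i w ++ emb i (tailBlock i w) = w := by
  obtain ⟨p, u, hp, rfl⟩ := exists_eq_append_emb i w
  rw [stripBlock_append_emb hp, tailBlock_append_emb, hp, List.nil_append]

theorem tail_strip (i : ι) (w : List (Σ i, α i)) : tailBlock i (stripBlock i w) = [] := by
  obtain ⟨p, u, hp, rfl⟩ := exists_eq_append_emb i w
  rw [stripBlock_append_emb hp, hp]

/-- Taking last blocks pulls regular languages back to regular languages: the automaton
restarts whenever a letter of another alphabet is read. -/
theorem IsRegularLang.tailBlock_preimage {i : ι} {R : Set (List (α i))} (h : IsRegularLang R) :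
    IsRegularLang {w : List (Σ i, α i) | tailBlock i w ∈ R} := by
  obtain ⟨σ, hσ, M, hM⟩ := isRegularLang_iff.1 h
  let D : DFA (Σ i, α i) σ :=
    ⟨fun s x => if h : x.1 = i then M.step s (h ▸ x.2) else M.start, M.start, M.accept⟩
  refine isRegularLang_iff.2 ⟨σ, hσ, D, fun w => ?_⟩
  have key : D.eval w = M.eval (tailBlock i w) := by
    induction w using List.reverseRecOn with
    | nil => rfl
    | append_singleton w x ih =>
      obtain ⟨k, a⟩ := x
      rw [DFA.eval_append_singleton, ih]
      by_cases h : k = i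
      · subst h
        simp [D]
      · simp [D, tailBlock_snoc_of_ne h, h]
  rw [key]
  exact hM _

/-! ### The language of normal forms of the free product -/

/-- The words all of whose blocks lie in the languages `N i`. When these are prefix-closed it
amounts to asking, of every prefix, that its last block over each alphabet (possibly empty) lie
in the corresponding language. -/
def blockLang (N : ∀ i, Set (List (α i))) : Set (List (Σ i, α i)) :=
  {w | ∀ p, p <+: w → ∀ i, tailBlock i p ∈ N i}

theorem tailBlock_mem {N : ∀ i, Set (List (α i))} {w : List (Σ i, α i)} (hw : w ∈ blockLang N)
    (i : ι) : tailBlock i w ∈ N i :=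
  hw w List.prefix_rfl i

theorem blockLang_prefixClosed (N : ∀ i, Set (List (α i))) : PrefixClosed (blockLang N) :=
  fun _ hw _ hp q hq => hw q (hq.trans hp)

theorem mem_blockLang_snoc {N : ∀ i, Set (List (α i))} (h0 : ∀ i, [] ∈ N i)
    {w : List (Σ i, α i)} (hw : w ∈ blockLang N) {i : ι} {a : α i} :
    w ++ [⟨i, a⟩] ∈ blockLang N ↔ tailBlock i w ++ [a] ∈ N i := by
  refine (forall_prefix_snoc (R := fun p => ∀ i, tailBlock i p ∈ N i)).trans ?_
  constructor
  · rintro ⟨-, h⟩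
    simpa using h i
  · refine fun h => ⟨hw, fun k => ?_⟩
    by_cases hk : i = k
    · subst hk
      simpa using h
    · rw [tailBlock_snoc_of_ne hk]
      exact h0 k

theorem append_emb_mem_blockLang {N : ∀ i, Set (List (α i))} (h0 : ∀ i, [] ∈ N i)
    (hN : ∀ i, PrefixClosed (N i)) {i : ι} {p : List (Σ i, α i)} (hp : p ∈ blockLang N)
    (hpi : tailBlock i p = []) {u : List (α i)} (hu : u ∈ N i) : p ++ emb i u ∈ blockLang N := by
  induction u using List.reverseRecOn with
  | nil => simpa [emb] using hp
  | append_singleton u a ih =>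
    have h := ih (hN i _ hu _ (List.prefix_append _ _))
    rw [emb_append, ← List.append_assoc]
    refine (mem_blockLang_snoc h0 h).2 ?_
    rwa [tailBlock_append_emb, hpi, List.nil_append]

theorem IsRegularLang.blockLang [Finite ι] {N : ∀ i, Set (List (α i))}
    (h : ∀ i, IsRegularLang (N i)) : IsRegularLang (blockLang N) := by
  have := (IsRegularLang.iInter fun i => (h i).tailBlock_preimage).prefixKernel
  convert this using 1
  ext w
  simp [_root_.blockLang]

/-! ### The right action on normal forms -/

variable {G : ι → Type} [∀ i, Group (G i)] {π : ∀ i, α i → G i} {inv : ∀ i, α i → α i}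
  {st : ∀ i, StackingData (α i)}

/-- Right multiplication by an element of the `i`-th factor, on normal forms of the free product:
only the last block over the `i`-th alphabet is affected. -/
noncomputable def act (H : ∀ i, IsStacking (G i) (π i) (inv i) (st i)) (i : ι) (g : G i)
    (w : blockLang fun i => (st i).N) : blockLang fun i => (st i).N :=
  ⟨stripBlock i w.1 ++ emb i ((H i).normalForm (wordVal (π i) (tailBlock i w.1) * g)),
    append_emb_mem_blockLang (fun i => (H i).nil_mem) (fun i => (H i).prefixClosed)
      (blockLang_prefixClosed _ _ w.2 _ (List.take_prefix _ _)) (tail_strip i _)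
      ((H i).normalForm_mem _)⟩

variable (H : ∀ i, IsStacking (G i) (π i) (inv i) (st i))

theorem act_val (i : ι) (g : G i) (w) : (act H i g w).1 = stripBlock i w.1 ++
    emb i ((H i).normalForm (wordVal (π i) (tailBlock i w.1) * g)) := rfl

theorem tailBlock_act (i : ι) (g : G i) (w) :
    tailBlock i (act H i g w).1 = (H i).normalForm (wordVal (π i) (tailBlock i w.1) * g) := by
  rw [act_val, tailBlock_append_emb, tail_strip, List.nil_append]

theorem act_one (i : ι) (w) : act H i 1 w = w := by
  apply Subtype.ext
  rw [act_val, mul_one, (H i).normalForm_wordVal (tailBlock_mem w.2 i), strip_append_tail]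

theorem act_mul (i : ι) (g h : G i) (w) : act H i (g * h) w = act H i h (act H i g w) := by
  apply Subtype.ext
  conv_rhs => rw [act_val, tailBlock_act, (H i).wordVal_normalForm]
  simp only [act_val, stripBlock_append_emb (tail_strip i w.1), mul_assoc]

/-- The right action of the `i`-th factor on normal forms, as a homomorphism into the opposite of
the monoid of self-maps. -/
noncomputable def actHom (i : ι) :
    G i →* (Function.End (blockLang fun i => (st i).N))ᵐᵒᵖ where
  toFun g := MulOpposite.op (act H i g)
  map_one' := congrArg MulOpposite.op (funext (act_one H i))
  map_mul' g h := congrArg MulOpposite.op (funext (act_mul H i g h))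

/-! ### The stacking structure on the free product -/

variable {P : Type} [Group P] (j : ∀ i, G i →* P)

theorem wordVal_act (i : ι) (g : G i) (w) :
    wordVal (fun x : Σ i, α i => j x.1 (π x.1 x.2)) (act H i g w).1 =
      wordVal (fun x : Σ i, α i => j x.1 (π x.1 x.2)) w.1 * j i g := by
  conv_rhs => rw [← strip_append_tail i w.1]
  rw [act_val, wordVal_append, wordVal_append, wordVal_emb, wordVal_emb, (H i).wordVal_normalForm,
    map_mul, mul_assoc]

/-- The stacking structure on the free product: the stacking map rewrites inside the last block
over the alphabet of the letter being multiplied. -/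
def freeStacking [Fintype ι] (st : ∀ i, StackingData (α i)) : StackingData (Σ i, α i) where
  N := blockLang fun i => (st i).N
  K := ∑ i, (st i).K
  phi y x := emb x.1 ((st x.1).phi (tailBlock x.1 y) x.2)

/-- The normal form theorem for the free product. The group `P` is only known through the
homomorphisms `j`: they generate it, and the actions of the factors on normal forms extend
to `P`. -/
theorem free_nf
    (F : P →* (Function.End (blockLang fun i => (st i).N))ᵐᵒᵖ)
    (hF : ∀ i g, F (j i g) = actHom H i g)
    (hgen : ∀ S : Submonoid P, (∀ i g, j i g ∈ S) → S = ⊤) (g : P) :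
    ∃! w, w ∈ (blockLang fun i => (st i).N) ∧
      wordVal (fun x : Σ i, α i => j x.1 (π x.1 x.2)) w = g := by
  have hact : ∀ i g w, (F (j i g)).unop w = act H i g w := fun i g w => by rw [hF]; rfl
  have hnil : [] ∈ blockLang fun i => (st i).N := by
    intro p hp i
    rw [List.prefix_nil.1 hp]
    exact (H i).nil_mem
  -- The action of `P` on normal forms is compatible with evaluation.
  have hval : ∀ g w, wordVal (fun x : Σ i, α i => j x.1 (π x.1 x.2)) ((F g).unop w).1 =
      wordVal (fun x : Σ i, α i => j x.1 (π x.1 x.2)) w.1 * g := by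
    let S : Submonoid P :=
      { carrier := {g | ∀ w, wordVal (fun x : Σ i, α i => j x.1 (π x.1 x.2)) ((F g).unop w).1 =
          wordVal (fun x : Σ i, α i => j x.1 (π x.1 x.2)) w.1 * g}
        one_mem' := fun w => by rw [map_one, mul_one]; rfl
        mul_mem' := by
          intro a b ha hb w
          rw [map_mul, ← mul_assoc, ← ha w, ← hb]
          rfl }
    have hS := hgen S fun i g w => by rw [hact, wordVal_act]
    intro g
    exact (hS ▸ Submonoid.mem_top g : g ∈ S)
  refine ⟨((F g).unop ⟨[], hnil⟩).1, ⟨Subtype.coe_prop _, ?_⟩, ?_⟩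
  · rw [hval, wordVal_nil, one_mul]
  · rintro w ⟨hw, rfl⟩
    induction w using List.reverseRecOn with
    | nil => rw [wordVal_nil, map_one]; rfl
    | append_singleton w x ih =>
      obtain ⟨i, a⟩ := x
      have hw' := blockLang_prefixClosed _ _ hw w (List.prefix_append _ _)
      have ih : (⟨w, hw'⟩ : blockLang fun i => (st i).N) = _ := Subtype.ext (ih hw')
      rw [wordVal_append, wordVal_singleton, map_mul, MulOpposite.unop_mul]
      change _ = ((F (j i (π i a))).unop ((F _).unop _)).1
      rw [← ih, hact, act_val, ← wordVal_singleton (π i) a, ← wordVal_append,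
        (H i).normalForm_wordVal ((mem_blockLang_snoc (fun i => (H i).nil_mem) hw').1 hw),
        emb_append, ← List.append_assoc, strip_append_tail]
      rfl

/-- The factors embed in the free product, since they act faithfully on normal forms. -/
theorem free_injective (F : P →* (Function.End (blockLang fun i => (st i).N))ᵐᵒᵖ)
    (hF : ∀ i g, F (j i g) = actHom H i g) (i : ι) {g : G i} (hg : j i g = 1) : g = 1 := by
  have hnil : [] ∈ blockLang fun i => (st i).N := by
    intro p hp i
    rw [List.prefix_nil.1 hp]
    exact (H i).nil_mem
  have h : act H i g ⟨[], hnil⟩ = ⟨[], hnil⟩ := by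
    have := hF i g
    rw [hg, map_one] at this
    exact (congrFun (congrArg MulOpposite.unop this) ⟨[], hnil⟩).symm
  have h' := tailBlock_act H i g ⟨[], hnil⟩
  rw [h, tailBlock_nil, wordVal_nil, one_mul] at h'
  rw [← (H i).wordVal_normalForm g, ← h', wordVal_nil]

theorem free_isStacking [Fintype ι]
    (F : P →* (Function.End (blockLang fun i => (st i).N))ᵐᵒᵖ)
    (hF : ∀ i g, F (j i g) = actHom H i g)
    (hgen : ∀ S : Submonoid P, (∀ i g, j i g ∈ S) → S = ⊤) :
    IsStacking P (fun x : Σ i, α i => j x.1 (π x.1 x.2)) (fun x => ⟨x.1, inv x.1 x.2⟩)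
      (freeStacking st) where
  gen :=
    { ne_one := fun x hx => (H x.1).gen.ne_one x.2 (free_injective H j F hF x.1 hx)
      inv_invol := fun x => by simp [(H x.1).gen.inv_invol]
      val_inv := fun x => by simp [(H x.1).gen.val_inv]
      gen := by
        set C := Subgroup.closure (Set.range fun x : Σ i, α i => j x.1 (π x.1 x.2)) with hC
        have h : C.toSubmonoid = ⊤ := by
          refine hgen _ fun i g => ?_
          have hle : Subgroup.closure (Set.range (π i)) ≤ C.comap (j i) := by
            rw [Subgroup.closure_le]
            rintro _ ⟨a, rfl⟩
            exact Subgroup.subset_closure ⟨⟨i, a⟩, rfl⟩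
          rw [(H i).gen.gen] at hle
          exact hle (Subgroup.mem_top g)
        exact Subgroup.toSubmonoid_injective h }
  nf := free_nf H j F hF hgen
  prefixClosed := blockLang_prefixClosed _
  F1 := by
    rintro y hy ⟨i, a⟩
    obtain ⟨h1, h2⟩ := (H i).F1 _ (tailBlock_mem hy i) a
    refine ⟨(wordVal_emb j π i _).trans (congrArg (j i) h1), ?_⟩
    have h3 : (st i).K ≤ ∑ i, (st i).K :=
      Finset.single_le_sum (f := fun i => (st i).K) (fun _ _ => Nat.zero_le _) (Finset.mem_univ i)
    simpa [freeStacking, emb] using h2.trans h3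
  F2 := by
    rintro y hy ⟨i, a⟩ h
    have : (st i).phi (tailBlock i y) a = [a] := by
      refine (H i).F2 _ (tailBlock_mem hy i) a (h.imp ?_ ?_)
      · exact (mem_blockLang_snoc (fun i => (H i).nil_mem) hy).1
      · rintro ⟨y', rfl⟩
        exact ⟨tailBlock i y', tailBlock_snoc_self i y' _⟩
    simp [freeStacking, this, emb]
  F3 := by
    rintro ⟨seq, hseq⟩
    -- The stacking map preserves the alphabet of the letter, so the whole chain lives over one
    -- alphabet and its last blocks form an infinite chain in that factor.
    obtain ⟨i, hi⟩ : ∃ i, ∀ n, (seq n).2.1 = i := by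
      refine ⟨(seq 0).2.1, fun n => ?_⟩
      induction n with
      | zero => rfl
      | succ n ih =>
        obtain ⟨-, -, -, u, u', h, -, -⟩ := hseq n
        have hmem : (seq (n + 1)).2 ∈ (freeStacking st).phi (seq n).1 (seq n).2 := by
          rw [h]; simp
        obtain ⟨b, -, hb⟩ := List.mem_map.1 hmem
        rw [← hb]
        exact ih
    have hex : ∀ n, ∃ b : α i, (seq n).2 = ⟨i, b⟩ := by
      intro n
      have := hi n
      generalize (seq n).2 = x at this
      obtain ⟨k, b⟩ := x
      subst this
      exact ⟨b, rfl⟩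
    choose b hb using hex
    refine (H i).F3 ⟨fun n => (tailBlock i (seq n).1, b n), fun n => ?_⟩
    obtain ⟨hy, hya, hinv, u, u', h, hy', hval⟩ := hseq n
    rw [hb] at hya hinv h
    rw [hb] at h
    refine ⟨tailBlock_mem hy i, ?_, ?_, ?_⟩
    · rwa [mem_blockLang_snoc (fun i => (H i).nil_mem) hy |>.symm]
    · rintro ⟨z, hz⟩
      refine hinv ⟨stripBlock i (seq n).1 ++ emb i z, ?_⟩
      conv_lhs => rw [← strip_append_tail i (seq n).1]
      change tailBlock i (seq n).1 = _ at hz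
      rw [hz, emb_append, List.append_assoc]
      rfl
    · obtain ⟨v, v₁, hv, rfl, hv₁⟩ := List.map_eq_append_iff.1 h
      obtain ⟨c, v', rfl, hc, rfl⟩ := List.map_eq_cons_iff.1 hv₁
      obtain rfl := sigma_mk_injective hc
      refine ⟨v, v', hv, tailBlock_mem hy' i, ?_⟩
      have heq : (seq (n + 1)).1 = (act H i (wordVal (π i) v) ⟨_, hy⟩).1 := by
        refine (free_nf H j F hF hgen _).unique ⟨hy', hval⟩ ⟨Subtype.coe_prop _, ?_⟩
        rw [wordVal_act, wordVal_append]
        exact congrArg _ (wordVal_emb j π i v).symm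
      change wordVal (π i) (tailBlock i (seq (n + 1)).1) =
        wordVal (π i) (tailBlock i (seq n).1 ++ v)
      rw [heq, tailBlock_act, (H i).wordVal_normalForm, wordVal_append]

/-- Regularity of the free product structure. As values of the stacking map are bounded in
length, its graph is a finite union of regular languages padded against fixed words. -/
theorem free_isAuto [Fintype ι] [∀ i, Finite (α i)]
    (hK : ∀ i, ∀ y ∈ (st i).N, ∀ a, ((st i).phi y a).length ≤ (st i).K)
    (hA : ∀ i, (st i).IsAuto) : (freeStacking st).IsAuto := by
  have hN : IsRegularLang (freeStacking st).N := IsRegularLang.blockLang fun i => (hA i).1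
  refine ⟨hN, ?_⟩
  have hfib : ∀ (x : Σ i, α i) (v : List (Σ i, α i)),
      IsRegularLang {y | y ∈ (freeStacking st).N ∧ (freeStacking st).phi y x = v} := by
    rintro ⟨i, a⟩ v
    by_cases hv : ∃ v₀, emb i v₀ = v
    · obtain ⟨v₀, rfl⟩ := hv
      convert hN.inter (SyncRegular3.fiber (hA i).2 [a] v₀).tailBlock_preimage using 1
      ext y
      simp only [Set.mem_ofPred_eq, Set.mem_inter_iff, Prod.mk.injEq, List.cons.injEq, and_true]
      refine and_congr_right fun hy => ⟨fun h => ?_, ?_⟩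
      · exact ⟨_, tailBlock_mem hy i, a, rfl, rfl, (emb_injective i h).symm⟩
      · rintro ⟨z, -, c, rfl, rfl, rfl⟩
        rfl
    · convert isRegularLang_empty using 1
      ext y
      simp only [Set.mem_ofPred_eq, Set.mem_empty_iff_false, iff_false]
      exact fun h => hv ⟨_, h.2⟩
  have := IsRegularLang.iUnion fun q : (Σ i, α i) × ShortWord (Σ i, α i) (freeStacking st).K =>
    (hfib q.1 q.2.1).pad [q.1] q.2.1
  refine (congrArg IsRegularLang ?_).mp this
  ext w
  simp only [Set.mem_iUnion, Set.mem_image, Set.mem_ofPred_eq]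
  constructor
  · rintro ⟨⟨x, v⟩, y, ⟨hy, hv⟩, rfl⟩
    exact ⟨_, ⟨y, hy, x, rfl⟩, by rw [hv]⟩
  · rintro ⟨_, ⟨y, hy, x, rfl⟩, rfl⟩
    refine ⟨⟨x, (freeStacking st).phi y x, ?_⟩, y, ⟨hy, rfl⟩, rfl⟩
    have h3 : (st x.1).K ≤ ∑ i, (st i).K :=
      Finset.single_le_sum (f := fun i => (st i).K) (fun _ _ => Nat.zero_le _) (Finset.mem_univ x.1)
    simpa [freeStacking, emb] using (hK x.1 _ (tailBlock_mem hy x.1) x.2).trans h3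

end FreeProduct

/-! ### Finite families and pairs of factors -/

/-- The free product theorem for a finite family of groups, where the free product is any group
`P` with homomorphisms `j` from the factors that generate it and satisfy the existence part of
its universal property. -/
theorem autostackable_of_coproduct {ι : Type} [Fintype ι] [DecidableEq ι] {G : ι → Type}
    [∀ i, Group (G i)] {P : Type} [Group P] (j : ∀ i, G i →* P)
    (hlift : ∀ (M : Type) [Monoid M] (f : ∀ i, G i →* M), ∃ F : P →* M, ∀ i g, F (j i g) = f i g)
    (hgen : ∀ S : Submonoid P, (∀ i g, j i g ∈ S) → S = ⊤)
    (h : ∀ i, Autostackable (G i)) : Autostackable P := by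
  choose α hα π inv st H hA using h
  obtain ⟨F, hF⟩ := hlift _ (actHom H)
  exact ⟨Σ i, α i, inferInstance, _, _, _, free_isStacking H j F hF hgen,
    free_isAuto (fun i y hy a => ((H i).F1 y hy a).2) hA⟩

/-- The two factors, as a family indexed by `Bool`. -/
def pairFamily (G₁ G₂ : Type) : Bool → Type
  | false => G₁
  | true => G₂

instance {G₁ G₂ : Type} [Group G₁] [Group G₂] : ∀ b, Group (pairFamily G₁ G₂ b)
  | false => inferInstanceAs (Group G₁)
  | true => inferInstanceAs (Group G₂)

/-- The canonical homomorphisms from the two factors to their free product. -/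
def pairHom (G₁ G₂ : Type) [Group G₁] [Group G₂] :
    ∀ b, pairFamily G₁ G₂ b →* Monoid.Coprod G₁ G₂
  | false => (Monoid.Coprod.inl : G₁ →* Monoid.Coprod G₁ G₂)
  | true => (Monoid.Coprod.inr : G₂ →* Monoid.Coprod G₁ G₂)

/-- **Theorem (free products).** If `G₁` and `G₂` are autostackable groups, then their
free product `G₁ ∗ G₂` is autostackable. -/
theorem free_product_autostackable
    {G₁ G₂ : Type} [Group G₁] [Group G₂]
    (h₁ : Autostackable G₁) (h₂ : Autostackable G₂) :
    Autostackable (Monoid.Coprod G₁ G₂) := by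
  refine autostackable_of_coproduct (pairHom G₁ G₂) (fun M _ f => ?_) (fun S hS => ?_) fun b => ?_
  · refine ⟨Monoid.Coprod.lift (f false) (f true), fun b => ?_⟩
    cases b
    · exact fun g => Monoid.Coprod.lift_apply_inl (f false) (f true) g
    · exact fun g => Monoid.Coprod.lift_apply_inr (f false) (f true) g
  · refine (Submonoid.eq_top_iff' S).2 fun x => ?_
    induction x using Monoid.Coprod.induction_on with
    | inl g => exact hS false g
    | inr g => exact hS true g
    | mul x y hx hy => exact S.mul_mem hx hy
  · cases b
    exacts [h₁, h₂]
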